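/- arXiv:2501.13103 — 4 statements merged into one kernel-verified Lean document; each statement's English description precedes it below -/
import Mathlib

section
/- For every n ≥ 1 and every 2ⁿ×2ⁿ complex matrix ρ, the uniform average over all 4ⁿ Pauli strings of the conjugation of ρ equals the maximally mixed state scaled by the trace of ρ: (1/4ⁿ)·∑_{y : Fin n → Fin 4} P_y ρ P_y = (tr ρ / 2ⁿ)·I_{2ⁿ}, where P_y = σ_{y(1)} ⊗ σ_{y(2)} ⊗ ⋯ ⊗ σ_{y(n)} is the ordered n-fold Kronecker product of Pauli matrices selected by y, and I_{2ⁿ} is the identity matrix of size 2ⁿ. -/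
open Matrix

/-- The four Pauli matrices: σ₀ = I, σ₁ = X, σ₂ = Y, σ₃ = Z. -/
noncomputable def pauli : Fin 4 → Matrix (Fin 2) (Fin 2) ℂ
  | 0 => !![1, 0; 0, 1]
  | 1 => !![0, 1; 1, 0]
  | 2 => !![0, -Complex.I; Complex.I, 0]
  | 3 => !![1, 0; 0, -1]

/-- The ordered `n`-fold Kronecker (tensor) product `σ_{y 0} ⊗ σ_{y 1} ⊗ ⋯ ⊗ σ_{y (n-1)}`
of Pauli matrices selected by `y`, realized as a matrix indexed by `Fin n → Fin 2`
(the entry at `(i, j)` is the product of the entries of the factors). -/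
noncomputable def pauliString (n : ℕ) (y : Fin n → Fin 4) :
    Matrix (Fin n → Fin 2) (Fin n → Fin 2) ℂ :=
  fun i j => ∏ k, pauli (y k) (i k) (j k)

/-!
The Pauli matrices satisfy the completeness relation `∑ₐ σₐ(i,j) σₐ(k,l) = 2 δ_{il} δ_{jk}`.
Since entries of a Pauli string are products of entries of its factors, the sum over all strings
factors qubit by qubit, so the same relation holds for strings with `2 ^ n` in place of `2`
(`sum_pauliString_mul`). Contracting it with `ρ` gives `∑ P ρ P = 2 ^ n (tr ρ) I`.
-/

/-- Completeness relation of the Pauli matrices: their sum `∑ₐ σₐ ⊗ σₐ` is twice the swap. -/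
lemma sum_pauli_mul (i j k l : Fin 2) :
    ∑ a, pauli a i j * pauli a k l = if i = l ∧ j = k then 2 else 0 := by
  fin_cases i <;> fin_cases j <;> fin_cases k <;> fin_cases l <;>
    simp [Fin.sum_univ_four, pauli] <;> norm_num

lemma sum_pauliString_mul (n : ℕ) (i j k l : Fin n → Fin 2) :
    ∑ y, pauliString n y i j * pauliString n y k l =
      if i = l ∧ j = k then 2 ^ n else 0 := by
  simp only [pauliString, ← Finset.prod_mul_distrib]
  rw [← Fintype.prod_sum (fun m a => pauli a (i m) (j m) * pauli a (k m) (l m))]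
  simp only [sum_pauli_mul]
  split_ifs with h
  · simp [h.1, h.2]
  · have : ∃ m, ¬ (i m = l m ∧ j m = k m) := by
      by_contra! h'
      exact h ⟨funext fun m => (h' m).1, funext fun m => (h' m).2⟩
    obtain ⟨m, hm⟩ := this
    exact Finset.prod_eq_zero (Finset.mem_univ m) (if_neg hm)

/-- The `n`-qubit Pauli twirl: the uniform average over all `4^n` Pauli strings of the
conjugation of `ρ` equals the maximally mixed state scaled by the trace of `ρ`. -/
theorem pauli_twirl_n (n : ℕ) (hn : 1 ≤ n)
    (ρ : Matrix (Fin n → Fin 2) (Fin n → Fin 2) ℂ) :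
    (1 / 4 ^ n : ℂ) • ∑ y : Fin n → Fin 4, pauliString n y * ρ * pauliString n y =
      (ρ.trace / 2 ^ n) • (1 : Matrix (Fin n → Fin 2) (Fin n → Fin 2) ℂ) := by
  have key (i l : Fin n → Fin 2) :
      ∑ y, (pauliString n y * ρ * pauliString n y) i l =
        if i = l then 2 ^ n * ρ.trace else 0 := by
    calc ∑ y, (pauliString n y * ρ * pauliString n y) i l
        = ∑ k, ∑ j, ρ j k * ∑ y, pauliString n y i j * pauliString n y k l := by
          simp only [Matrix.mul_apply, Finset.sum_mul, Finset.mul_sum]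
          rw [Finset.sum_comm]
          refine Finset.sum_congr rfl fun k _ => ?_
          rw [Finset.sum_comm]
          refine Finset.sum_congr rfl fun j _ => Finset.sum_congr rfl fun y _ => ?_
          ring
      _ = _ := by
          simp only [sum_pauliString_mul]
          by_cases h : i = l
          · simp [h, Matrix.trace, Finset.mul_sum, mul_comm]
          · simp [h]
  ext i l
  rw [Matrix.smul_apply, Matrix.sum_apply, key, Matrix.smul_apply, Matrix.one_apply]
  split_ifs
  · have h4 : (4 : ℂ) ^ n = 2 ^ n * 2 ^ n := by
      rw [← mul_pow]; norm_num
    rw [h4, smul_eq_mul, smul_eq_mul]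
    field_simp
  · simp
end

section
/- For every λ ∈ ℝ, every real vector q = (q₀,q₁,q₂,q₃) with q₀+q₁+q₂+q₃ = 1, and every 2×2 complex matrix ρ, composing the depolarizing channel with parameter λ after the Pauli channel E_q yields the Pauli channel E_p, i.e. E_{(1−3λ/4, λ/4, λ/4, λ/4)}(E_q(ρ)) = E_p(ρ), where p_k = (1−λ)·q_k + λ/4 for each k ∈ {0,1,2,3}. -/
/-! In matrix entries, a Pauli channel mixes the two diagonal entries with weights
`p 0 + p 3` and `p 1 + p 2`, and the two off-diagonal entries with weights `p 0 - p 3` and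
`p 1 - p 2` (`pauliChannel_eq`). For the depolarizing parameters these weights are
`1 - lam / 2`, `lam / 2` and `1 - lam`, `0`. Composing with `E_q` therefore scales the
off-diagonal part by `1 - lam`, and on the diagonal the normalization `∑ k, q k = 1` makes the
additional term `lam / 2 * ρ.trace`, which is also the contribution of the shift of every
parameter by `lam / 4`. -/

open Matrix

/-- The Pauli channel with parameter vector `p`: `ρ ↦ ∑ k, p k σ_k ρ σ_k`. -/
noncomputable def pauliChannel (p : Fin 4 → ℝ) (ρ : Matrix (Fin 2) (Fin 2) ℂ) :
    Matrix (Fin 2) (Fin 2) ℂ :=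
  ∑ k, (p k : ℂ) • (pauli k * ρ * pauli k)

/-- The entrywise form of a Pauli channel. -/
lemma pauliChannel_eq (p : Fin 4 → ℝ) (ρ : Matrix (Fin 2) (Fin 2) ℂ) :
    pauliChannel p ρ =
      !![((p 0 : ℂ) + p 3) * ρ 0 0 + ((p 1 : ℂ) + p 2) * ρ 1 1,
         ((p 0 : ℂ) - p 3) * ρ 0 1 + ((p 1 : ℂ) - p 2) * ρ 1 0;
         ((p 0 : ℂ) - p 3) * ρ 1 0 + ((p 1 : ℂ) - p 2) * ρ 0 1,
         ((p 0 : ℂ) + p 3) * ρ 1 1 + ((p 1 : ℂ) + p 2) * ρ 0 0] := by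
  rw [Matrix.eta_fin_two ρ]
  ext i j
  fin_cases i <;> fin_cases j <;> simp [pauliChannel, pauli, Fin.sum_univ_four]
  · linear_combination -(p 2 : ℂ) * ρ 1 1 * Complex.I_mul_I
  · linear_combination (p 2 : ℂ) * ρ 1 0 * Complex.I_mul_I
  · linear_combination (p 2 : ℂ) * ρ 0 1 * Complex.I_mul_I
  · linear_combination -(p 2 : ℂ) * ρ 0 0 * Complex.I_mul_I

/-- Composing the depolarizing channel of parameter `λ` (the Pauli channel with parameter
vector `(1 − 3λ/4, λ/4, λ/4, λ/4)`) after the Pauli channel `E_q`, for a parameter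
vector `q` summing to 1, yields the Pauli channel with parameters
`p k = (1 − λ)·q k + λ/4`. -/
theorem depolarizing_comp_pauliChannel (lam : ℝ) (q : Fin 4 → ℝ)
    (hq : ∑ k, q k = 1) (ρ : Matrix (Fin 2) (Fin 2) ℂ) :
    pauliChannel ![1 - 3 * lam / 4, lam / 4, lam / 4, lam / 4] (pauliChannel q ρ) =
      pauliChannel (fun k => (1 - lam) * q k + lam / 4) ρ := by
  have h : (q 0 : ℂ) + q 1 + q 2 + q 3 = 1 := by
    rw [Fin.sum_univ_four] at hq
    exact_mod_cast hq
  simp only [pauliChannel_eq]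
  ext i j
  fin_cases i <;> fin_cases j <;> simp
  · linear_combination (lam : ℂ) / 2 * (ρ 0 0 + ρ 1 1) * h
  · ring
  · ring
  · linear_combination (lam : ℂ) / 2 * (ρ 0 0 + ρ 1 1) * h
end

section
/- Let ρ and σ be density matrices on ℂ^d with σ positive definite, and let q ∈ [0,1]. Then the quantum relative entropy of the mixture (1−q)σ + qρ with respect to σ is bounded by q² times the quantum χ²-divergence of ρ from σ: D((1−q)σ + qρ ‖ σ) ≤ q²·(tr(ρ²σ⁻¹) − 1). -/
/-!
Let `τ = ∑ᵢ λᵢ |uᵢ⟩⟨uᵢ|` and `σ = ∑ⱼ μⱼ |vⱼ⟩⟨vⱼ|` be spectral decompositions and put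
`wᵢⱼ = |⟨uᵢ, vⱼ⟩|²`, a matrix whose rows sum to `1`. Every trace `tr (f(τ) g(σ))` equals
`∑ᵢⱼ wᵢⱼ f(λᵢ) g(μⱼ)`, so the quantum relative entropy and the quantum χ²-divergence become the
classical ones of the distributions `wᵢⱼ λᵢ` and `wᵢⱼ μⱼ` (the Nussbaum–Szkoła distributions).
The scalar inequality `log x ≤ x - 1` at `x = λᵢ / μⱼ` then gives `D(τ‖σ) ≤ tr(τ²σ⁻¹) - 1`
(`qRelEnt_le_chiSq`). For `τ = (1-q)σ + qρ` the right-hand side is exactly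
`q² (tr(ρ²σ⁻¹) - 1)` (`chiSq_mixture`).
-/

open Matrix ComplexOrder

/-- The matrix logarithm of a Hermitian matrix, defined by functional calculus on the
spectral decomposition (natural logarithm on eigenvalues); junk value `0` for
non-Hermitian input. -/
noncomputable def matLog {m : Type*} [Fintype m] [DecidableEq m]
    (A : Matrix m m ℂ) : Matrix m m ℂ :=
  if h : A.IsHermitian then
    (h.eigenvectorUnitary : Matrix m m ℂ) *
      Matrix.diagonal (fun i => (Real.log (h.eigenvalues i) : ℂ)) *
      (star (h.eigenvectorUnitary : Matrix m m ℂ))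
  else 0

/-- `tr(A log A) = ∑ᵢ λᵢ log λᵢ` over the eigenvalues of a Hermitian matrix `A`, with
the convention `0 log 0 = 0` (`Real.log 0 = 0`); junk value `0` for non-Hermitian
input. -/
noncomputable def trLogSelf {m : Type*} [Fintype m] [DecidableEq m]
    (A : Matrix m m ℂ) : ℝ :=
  if h : A.IsHermitian then ∑ i, h.eigenvalues i * Real.log (h.eigenvalues i) else 0

/-- The von Neumann entropy `S(ρ) = −tr(ρ log ρ)` of a density matrix. -/
noncomputable def vnEntropy {m : Type*} [Fintype m] [DecidableEq m]
    (A : Matrix m m ℂ) : ℝ := -trLogSelf A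

/-- The quantum relative entropy `D(ρ‖σ) = tr(ρ log ρ) − tr(ρ log σ)`. -/
noncomputable def qRelEnt {m : Type*} [Fintype m] [DecidableEq m]
    (ρ σ : Matrix m m ℂ) : ℝ :=
  trLogSelf ρ - ((ρ * matLog σ).trace).re

section

variable {m : Type*} [Fintype m] [DecidableEq m]

/-- The overlap formula `tr (f(τ) g(σ)) = ∑ᵢⱼ f(λᵢ) g(μⱼ) |⟨uᵢ, vⱼ⟩|²`, where the columns of the
unitaries `U`, `V` are the eigenvectors `uᵢ`, `vⱼ`. -/
lemma trace_conj_diagonal_mul (U V : Matrix m m ℂ) (a b : m → ℝ) :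
    ((U * diagonal (fun i => (a i : ℂ)) * star U) *
      (V * diagonal (fun i => (b i : ℂ)) * star V)).trace.re =
      ∑ i, ∑ j, a i * b j * Complex.normSq ((star U * V) i j) := by
  have h : ((U * diagonal (fun i => (a i : ℂ)) * star U) *
      (V * diagonal (fun i => (b i : ℂ)) * star V)).trace =
      ((diagonal (fun i => (a i : ℂ)) * (star U * V)) *
        (diagonal (fun i => (b i : ℂ)) * star (star U * V))).trace := by
    rw [star_mul, star_star]
    simp only [Matrix.mul_assoc]
    rw [Matrix.trace_mul_comm U]
    simp only [Matrix.mul_assoc]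
  rw [h, Matrix.trace, Complex.re_sum]
  refine Finset.sum_congr rfl fun i _ => ?_
  rw [Matrix.diag_apply, Matrix.mul_apply, Complex.re_sum]
  refine Finset.sum_congr rfl fun j _ => ?_
  rw [diagonal_mul, diagonal_mul, Matrix.star_apply]
  have h2 : (a i : ℂ) * (star U * V) i j * ((b j : ℂ) * star ((star U * V) i j)) =
      ((a i * b j * Complex.normSq ((star U * V) i j) : ℝ) : ℂ) := by
    push_cast
    rw [← Complex.mul_conj]
    simp only [starRingEnd_apply]
    ring
  rw [h2, Complex.ofReal_re]

lemma sum_normSq_row (W : Matrix m m ℂ) (hW : W * star W = 1) (i : m) :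
    ∑ j, Complex.normSq (W i j) = 1 := by
  have h := congrFun (congrFun hW i) i
  rw [Matrix.mul_apply, Matrix.one_apply_eq] at h
  have h2 : ((∑ j, Complex.normSq (W i j) : ℝ) : ℂ) = 1 := by
    rw [← h]
    push_cast
    refine Finset.sum_congr rfl fun j _ => ?_
    rw [← Complex.mul_conj, Matrix.star_apply, starRingEnd_apply]
  exact_mod_cast h2

lemma spectral_eq {A : Matrix m m ℂ} (h : A.IsHermitian) :
    A = (h.eigenvectorUnitary : Matrix m m ℂ) * diagonal (fun i => (h.eigenvalues i : ℂ)) *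
      star (h.eigenvectorUnitary : Matrix m m ℂ) := by
  have := h.spectral_theorem
  rw [Unitary.conjStarAlgAut_apply] at this
  exact this

lemma conj_diagonal_mul_conj_diagonal (U : unitaryGroup m ℂ) (a b : m → ℝ) :
    ((U : Matrix m m ℂ) * diagonal (fun i => (a i : ℂ)) * star (U : Matrix m m ℂ)) *
      ((U : Matrix m m ℂ) * diagonal (fun i => (b i : ℂ)) * star (U : Matrix m m ℂ)) =
      (U : Matrix m m ℂ) * diagonal (fun i => ((a i * b i : ℝ) : ℂ)) *
        star (U : Matrix m m ℂ) := by
  have hU : star (U : Matrix m m ℂ) * (U : Matrix m m ℂ) = 1 := Unitary.coe_star_mul_self _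
  generalize (U : Matrix m m ℂ) = V at hU ⊢
  simp only [Complex.ofReal_mul]
  rw [← diagonal_mul_diagonal]
  calc _ = V * diagonal (fun i => (a i : ℂ)) * (star V * V) * diagonal (fun i => (b i : ℂ)) *
        star V := by simp only [Matrix.mul_assoc]
    _ = _ := by rw [hU, Matrix.mul_one]; simp only [Matrix.mul_assoc]

lemma spectral_inv {A : Matrix m m ℂ} (h : A.PosDef) :
    A⁻¹ = (h.isHermitian.eigenvectorUnitary : Matrix m m ℂ) *
      diagonal (fun i => (((h.isHermitian.eigenvalues i)⁻¹ : ℝ) : ℂ)) *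
      star (h.isHermitian.eigenvectorUnitary : Matrix m m ℂ) := by
  apply Matrix.inv_eq_right_inv
  refine (congrArg (· * _) (spectral_eq h.isHermitian)).trans ?_
  refine (conj_diagonal_mul_conj_diagonal _ _ _).trans ?_
  have hd : (fun i => ((h.isHermitian.eigenvalues i * (h.isHermitian.eigenvalues i)⁻¹ : ℝ) : ℂ)) = fun _ => 1 := by
    funext i
    rw [mul_inv_cancel₀ (h.eigenvalues_pos i).ne', Complex.ofReal_one]
  rw [hd, diagonal_one, Matrix.mul_one]
  exact Unitary.coe_mul_star_self _

lemma spectral_sq {A : Matrix m m ℂ} (h : A.IsHermitian) :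
    A * A = (h.eigenvectorUnitary : Matrix m m ℂ) *
      diagonal (fun i => ((h.eigenvalues i * h.eigenvalues i : ℝ) : ℂ)) *
      star (h.eigenvectorUnitary : Matrix m m ℂ) :=
  (congrArg₂ (· * ·) (spectral_eq h) (spectral_eq h)).trans
    (conj_diagonal_mul_conj_diagonal _ _ _)

/-- `D(τ‖σ) ≤ tr(τ²σ⁻¹) - 1` for a state `τ` and any positive definite `σ`; the normalization
of `σ` plays no role. -/
lemma qRelEnt_le_chiSq {τ σ : Matrix m m ℂ} (hτ : τ.PosSemidef) (hτt : τ.trace = 1)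
    (hσ : σ.PosDef) : qRelEnt τ σ ≤ ((τ * τ * σ⁻¹).trace).re - 1 := by
  have hlog : ((τ * matLog σ).trace).re = ∑ i, ∑ j, hτ.isHermitian.eigenvalues i *
      Real.log (hσ.isHermitian.eigenvalues j) * Complex.normSq ((star (hτ.isHermitian.eigenvectorUnitary :
        Matrix m m ℂ) * (hσ.isHermitian.eigenvectorUnitary : Matrix m m ℂ)) i j) := by
    rw [← trace_conj_diagonal_mul, ← spectral_eq hτ.isHermitian, matLog, dif_pos hσ.isHermitian]
  have hchi : ((τ * τ * σ⁻¹).trace).re = ∑ i, ∑ j, hτ.isHermitian.eigenvalues i * hτ.isHermitian.eigenvalues i *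
      (hσ.isHermitian.eigenvalues j)⁻¹ * Complex.normSq ((star (hτ.isHermitian.eigenvectorUnitary :
        Matrix m m ℂ) * (hσ.isHermitian.eigenvectorUnitary : Matrix m m ℂ)) i j) := by
    rw [← trace_conj_diagonal_mul, ← spectral_sq hτ.isHermitian, ← spectral_inv hσ]
  have hsum : ∑ i, hτ.isHermitian.eigenvalues i = 1 := by
    have h := hτ.isHermitian.trace_eq_sum_eigenvalues
    rw [hτt] at h
    have h2 : ((∑ i, hτ.isHermitian.eigenvalues i : ℝ) : ℂ) = 1 := by
      rw [h]
      push_cast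
      rfl
    exact_mod_cast h2
  have hW := sum_normSq_row (star (hτ.isHermitian.eigenvectorUnitary : Matrix m m ℂ) *
      (hσ.isHermitian.eigenvectorUnitary : Matrix m m ℂ)) (by
    exact (star (hτ.isHermitian.eigenvectorUnitary) * hσ.isHermitian.eigenvectorUnitary).2.2)
  rw [qRelEnt, trLogSelf, dif_pos hτ.isHermitian, hlog, hchi, ← hsum, ← Finset.sum_sub_distrib,
    ← Finset.sum_sub_distrib]
  refine Finset.sum_le_sum fun i _ => ?_
  -- The row sums spread the single sums over `i` into double sums with weights `wᵢⱼ`.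
  have hspread (c : ℝ) : c = ∑ j, c * Complex.normSq
      ((star (hτ.isHermitian.eigenvectorUnitary : Matrix m m ℂ) *
        (hσ.isHermitian.eigenvectorUnitary : Matrix m m ℂ)) i j) := by
    rw [← Finset.mul_sum, hW i, mul_one]
  refine (congrArg (· - _) (hspread _)).trans_le
    (le_of_le_of_eq ?_ (congrArg (_ - ·) (hspread _)).symm)
  rw [← Finset.sum_sub_distrib, ← Finset.sum_sub_distrib]
  refine Finset.sum_le_sum fun j _ => ?_
  have hw := Complex.normSq_nonneg ((star (hτ.isHermitian.eigenvectorUnitary : Matrix m m ℂ) *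
      (hσ.isHermitian.eigenvectorUnitary : Matrix m m ℂ)) i j)
  generalize Complex.normSq _ = w at hw ⊢
  have hl := hτ.eigenvalues_nonneg i
  have hm := hσ.eigenvalues_pos j
  generalize hτ.isHermitian.eigenvalues i = l at hl ⊢
  generalize hσ.isHermitian.eigenvalues j = μ at hm ⊢
  rcases hl.eq_or_lt with rfl | hl
  · simp
  have key := Real.log_le_sub_one_of_pos (div_pos hl hm)
  rw [Real.log_div hl.ne' hm.ne', div_eq_mul_inv] at key
  have := mul_le_mul_of_nonneg_left key (mul_nonneg hl.le hw)
  linarith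

/-- The χ²-divergence of the mixture is quadratic in `q`: after expansion, all terms other than
`q² tr(ρ²σ⁻¹)` have trace `1` by cyclicity, so their weights sum to `1 - q²`. -/
lemma chiSq_mixture {ρ σ : Matrix m m ℂ} (hρt : ρ.trace = 1) (hσ : σ.PosDef)
    (hσt : σ.trace = 1) (q : ℝ) :
    ((((((1 - q : ℝ) : ℂ) • σ + ((q : ℝ) : ℂ) • ρ) *
      (((1 - q : ℝ) : ℂ) • σ + ((q : ℝ) : ℂ) • ρ)) * σ⁻¹).trace).re - 1 = q ^ 2 * (((ρ * ρ * σ⁻¹).trace).re - 1) := by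
  have hdet : IsUnit σ.det := (Matrix.isUnit_iff_isUnit_det σ).1 hσ.isUnit
  have h1 : (σ * σ * σ⁻¹).trace = 1 := by rw [Matrix.mul_nonsing_inv_cancel_right _ _ hdet, hσt]
  have h2 : (ρ * σ * σ⁻¹).trace = 1 := by rw [Matrix.mul_nonsing_inv_cancel_right _ _ hdet, hρt]
  have h3 : (σ * ρ * σ⁻¹).trace = 1 := by
    rw [Matrix.trace_mul_comm, Matrix.nonsing_inv_mul_cancel_left _ _ hdet, hρt]
  simp only [Matrix.add_mul, Matrix.mul_add, Matrix.smul_mul, Matrix.mul_smul, Matrix.trace_add,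
    Matrix.trace_smul, h1, h2, h3, smul_eq_mul, Complex.add_re, Complex.re_ofReal_mul,
    Complex.one_re]
  ring

end

/-- The quantum relative entropy of the mixture `(1−q)σ + qρ` with respect to `σ` is
bounded by `q²` times the quantum χ²-divergence `tr(ρ²σ⁻¹) − 1` of `ρ` from `σ`. -/
theorem qRelEnt_mixture_le_sq_chiSq {d : ℕ} (ρ σ : Matrix (Fin d) (Fin d) ℂ)
    (hρ : ρ.PosSemidef) (hρt : ρ.trace = 1)
    (hσ : σ.PosDef) (hσt : σ.trace = 1)
    (q : ℝ) (hq0 : 0 ≤ q) (hq1 : q ≤ 1) :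
    qRelEnt (((1 - q : ℝ) : ℂ) • σ + ((q : ℝ) : ℂ) • ρ) σ ≤
      q ^ 2 * (((ρ * ρ * σ⁻¹).trace).re - 1) := by
  rw [← chiSq_mixture hρt hσ hσt q]
  refine qRelEnt_le_chiSq ?_ ?_ hσ
  · exact (hσ.posSemidef.smul (Complex.zero_le_real.2 (sub_nonneg.2 hq1))).add
      (hρ.smul (Complex.zero_le_real.2 hq0))
  · rw [Matrix.trace_add, Matrix.trace_smul, Matrix.trace_smul, hρt, hσt]
    simp
end

section
/- Let p_f ∈ [0,1] and let q = (q₀,q₁,q₂,q₃) be a probability vector of reals (q_k ≥ 0, ∑_k q_k = 1). Define p_k = (1−p_f)·q_k + p_f/4 for each k. Then the achievable rates satisfy max(0, 1 − H₂(p)) ≤ (1 − p_f)·max(0, 1 − H₂(q)), where H₂(v) = −∑_{k=0}^{3} v_k · log₂ v_k is the Shannon entropy in bits (with 0·log₂ 0 = 0). -/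
/-! Shannon entropy is concave, and `p = (1 - pf) • q + pf • u` is a mixture of `q` with the
uniform vector `u`, whose entropy is 2 bits. Hence `H₂(p) ≥ (1 - pf) * H₂(q) + 2 * pf`, that is,
`1 - H₂(p) ≤ (1 - pf) * (1 - H₂(q)) - pf`, and the right-hand side is at most
`(1 - pf) * [1 - H₂(q)]⁺`, which is nonnegative. -/

/-- The Shannon entropy in bits of a vector `v` of four reals:
`H₂(v) = −∑ k, v k · log₂ (v k)`, with the convention `0·log₂ 0 = 0`
(`Real.logb 2 0 = 0`). -/
noncomputable def shannonEntropy2 (v : Fin 4 → ℝ) : ℝ :=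
  -∑ k, v k * Real.logb 2 (v k)

/-- Concavity of `x ↦ -x * log₂ x` between `x` and `1/4`, where its value is `1/2`. -/
theorem mul_logb_mix_le (t x : ℝ) (ht0 : 0 ≤ t) (ht1 : t ≤ 1) (hx : 0 ≤ x) :
    ((1 - t) * x + t / 4) * Real.logb 2 ((1 - t) * x + t / 4) ≤
      (1 - t) * (x * Real.logb 2 x) - t / 2 := by
  have hlog2 : 0 < Real.log 2 := Real.log_pos (by norm_num)
  have h := Real.convexOn_mul_log.2 (Set.mem_Ici.mpr hx)
    (Set.mem_Ici.mpr (by norm_num : (0 : ℝ) ≤ 1 / 4)) (sub_nonneg.mpr ht1) ht0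
    (sub_add_cancel 1 t)
  have h4 : Real.log (1 / 4) = -(2 * Real.log 2) := by
    rw [show (1 / 4 : ℝ) = (2 ^ 2)⁻¹ by norm_num, Real.log_inv, Real.log_pow]
    norm_num
  simp only [smul_eq_mul] at h
  rw [h4, show t * (1 / 4 : ℝ) = t / 4 by ring] at h
  have e : (1 - t) * (x * Real.logb 2 x) - t / 2 =
      ((1 - t) * (x * Real.log x) + t * (1 / 4 * -(2 * Real.log 2))) / Real.log 2 := by
    unfold Real.logb
    field_simp
    ring
  rw [e, Real.logb, ← mul_div_assoc]
  refine div_le_div_of_nonneg_right ?_ hlog2.le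
  linarith

/-- For a probability vector `q` and `p_f ∈ [0,1]`, with
`p k = (1 − p_f)·q k + p_f/4`, the hashing-bound rate of the combined channel is at most
the two-way-assisted distillation rate: `[1 − H₂(p)]⁺ ≤ (1 − p_f)·[1 − H₂(q)]⁺`. -/
theorem hashing_rate_le_distillation_rate (pf : ℝ) (hpf0 : 0 ≤ pf) (hpf1 : pf ≤ 1)
    (q : Fin 4 → ℝ) (hq0 : ∀ k, 0 ≤ q k) (hq1 : ∑ k, q k = 1) :
    max 0 (1 - shannonEntropy2 (fun k => (1 - pf) * q k + pf / 4)) ≤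
      (1 - pf) * max 0 (1 - shannonEntropy2 q) := by
  have hH : (1 - pf) * shannonEntropy2 q + 2 * pf ≤
      shannonEntropy2 (fun k => (1 - pf) * q k + pf / 4) := by
    have h := fun k => mul_logb_mix_le pf (q k) hpf0 hpf1 (hq0 k)
    simp only [shannonEntropy2, Fin.sum_univ_four]
    linarith [h 0, h 1, h 2, h 3]
  have ht : 0 ≤ 1 - pf := sub_nonneg.mpr hpf1
  have hm := mul_le_mul_of_nonneg_left (le_max_right 0 (1 - shannonEntropy2 q)) ht
  refine max_le (mul_nonneg ht (le_max_left _ _)) ?_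
  linarith
end
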